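/- For all integers n, k, K with 2 ≤ k < K ≤ n, there exist symmetric probability distributions μ and ν on {0,1}^n that are perfectly k-wise indistinguishable and satisfy E_{X∼μ}[AND_K(X)] − E_{Y∼ν}[AND_K(Y)] ≥ sqrt(2^{−4K+3} · Σ_{d=k+1}^{K} C(2K, K+d)²), where AND_K(x) = ∏_{i=1}^{K} x_i is the AND of the first K bits of x. -/

import Mathlib

open Finset

/-- Hamming weight of a Boolean string. -/
def wt {n : ℕ} (x : Fin n → Bool) : ℕ := (Finset.univ.filter (fun i => x i = true)).card

/-- `μ` is a probability distribution on `{0,1}^n`. -/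
def IsProb {n : ℕ} (μ : (Fin n → Bool) → ℝ) : Prop :=
  (∀ x, 0 ≤ μ x) ∧ ∑ x : Fin n → Bool, μ x = 1

/-- `μ` is symmetric: `μ x` depends only on the Hamming weight of `x`. -/
def SymmDist {n : ℕ} (μ : (Fin n → Bool) → ℝ) : Prop := ∀ x y, wt x = wt y → μ x = μ y

/-- The probability, under `μ`, of agreeing with `z` on the coordinates in `S`;
this describes the marginal distribution `μ|_S`. -/
def marg {n : ℕ} (μ : (Fin n → Bool) → ℝ) (S : Finset (Fin n)) (z : Fin n → Bool) : ℝ :=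
  ∑ x : Fin n → Bool, if ∀ i ∈ S, x i = z i then μ x else 0

/-- Perfect `k`-wise indistinguishability: equality of all marginals on sets of
size at most `k`. -/
def PerfIndist {n : ℕ} (μ ν : (Fin n → Bool) → ℝ) (k : ℕ) : Prop :=
  ∀ S : Finset (Fin n), S.card ≤ k → ∀ z, marg μ S z = marg ν S z

/-- `AND_K : {0,1}^n → {0,1}`, the AND of the first `K` bits. -/
def andK (n K : ℕ) (x : Fin n → Bool) : ℝ :=
  if ∀ i : Fin n, (i : ℕ) < K → x i = true then 1 else 0


lemma aux_cos_sum (N d : ℕ) (hd : 0 < d) (hdN : d < N) :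
    ∑ j ∈ range N, Real.cos (d * (2 * Real.pi * j / N)) = 0 := by
  have hN : N ≠ 0 := by omega
  have hp := Complex.isPrimitiveRoot_exp N hN
  set ζ := Complex.exp (2 * Real.pi * Complex.I / N) with hζ
  have h1 : ζ ^ d ≠ 1 := hp.pow_ne_one_of_pos_of_lt hd.ne' hdN
  have h2 : ∑ j ∈ range N, (ζ ^ d) ^ j = 0 := by
    rw [geom_sum_eq h1, ← pow_mul, mul_comm, pow_mul, hp.pow_eq_one]; simp
  have h3 := congrArg Complex.re h2
  rw [Complex.re_sum] at h3
  rw [← Complex.zero_re, ← h3]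
  apply Finset.sum_congr rfl
  intro j _
  have : (ζ ^ d) ^ j = Complex.exp (((d * (2 * Real.pi * j / N) : ℝ) : ℂ) * Complex.I) := by
    rw [hζ, ← Complex.exp_nat_mul, ← Complex.exp_nat_mul]
    congr 1
    push_cast
    ring
  rw [this, Complex.exp_ofReal_mul_I_re]

noncomputable def auxθ (N j : ℕ) : ℝ := 2 * Real.pi * j / N

noncomputable def auxt (N j : ℕ) : ℝ := (1 + Real.cos (auxθ N j)) / 2

lemma auxS0 (N d : ℕ) (hdN : d < N) :
    ∑ j ∈ range N, Real.cos (d * auxθ N j) = if d = 0 then (N : ℝ) else 0 := by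
  split_ifs with h
  · subst h; simp
  · exact aux_cos_sum N d (by omega) hdN

lemma aux_choose (m d : ℕ) : (2 * (m + 1)).choose (m + 1 + (d + 1)) =
    (2 * m).choose (m + d) + 2 * (2 * m).choose (m + (d + 1)) + (2 * m).choose (m + (d + 2)) := by
  rw [show 2 * (m + 1) = (2 * m + 1) + 1 by ring, show m + 1 + (d + 1) = (m + d + 1) + 1 by ring,
    Nat.choose_succ_succ, Nat.choose_succ_succ, Nat.choose_succ_succ]
  simp only [Nat.succ_eq_add_one, add_assoc]
  ring_nf

lemma aux_choose0 (m : ℕ) : (2 * (m + 1)).choose (m + 1) =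
    2 * (2 * m).choose m + 2 * (2 * m).choose (m + 1) := by
  rw [show 2 * (m + 1) = (2 * m + 1) + 1 by ring,
    Nat.choose_succ_succ]
  have : (2 * m + 1).choose m = (2 * m + 1).choose (m + 1) := by
    apply Nat.choose_symm_of_eq_add; ring
  rw [this, Nat.choose_succ_succ]
  simp only [Nat.succ_eq_add_one]
  ring

lemma auxS (N m : ℕ) : ∀ d : ℕ, d + m < N →
    ∑ j ∈ range N, Real.cos (d * auxθ N j) * auxt N j ^ m =
      N * ((2 * m).choose (m + d) : ℝ) / 4 ^ m := by
  induction m with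
  | zero =>
    intro d hd
    simp only [pow_zero, mul_one, auxS0 N d hd]
    rcases d with _ | d <;> simp
  | succ m ih =>
    intro d hd
    rcases d with _ | d
    · have e : ∀ j ∈ range N, Real.cos ((0 : ℕ) * auxθ N j) * auxt N j ^ (m + 1) =
          1 / 2 * (Real.cos ((0 : ℕ) * auxθ N j) * auxt N j ^ m) +
          1 / 2 * (Real.cos ((1 : ℕ) * auxθ N j) * auxt N j ^ m) := by
        intro j _
        simp only [pow_succ]
        nth_rewrite 2 [auxt]
        simp
        ring
      rw [Finset.sum_congr rfl e, Finset.sum_add_distrib, ← Finset.mul_sum, ← Finset.mul_sum,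
        ih 0 (by omega), ih 1 (by omega), add_zero, aux_choose0]
      push_cast
      simp only [pow_succ]
      field_simp
      ring
    · have e : ∀ j ∈ range N, Real.cos ((d + 1 : ℕ) * auxθ N j) * auxt N j ^ (m + 1) =
          1 / 2 * (Real.cos ((d + 1 : ℕ) * auxθ N j) * auxt N j ^ m) +
          (1 / 4 * (Real.cos ((d : ℕ) * auxθ N j) * auxt N j ^ m) +
          1 / 4 * (Real.cos ((d + 2 : ℕ) * auxθ N j) * auxt N j ^ m)) := by
        intro j _
        have h1 : Real.cos ((d : ℕ) * auxθ N j) + Real.cos ((d + 2 : ℕ) * auxθ N j) =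
            2 * Real.cos ((d + 1 : ℕ) * auxθ N j) * Real.cos (auxθ N j) := by
          have a1 : ((d : ℕ) : ℝ) * auxθ N j = (d + 1 : ℕ) * auxθ N j - auxθ N j := by
            push_cast; ring
          have a2 : ((d + 2 : ℕ) : ℝ) * auxθ N j = (d + 1 : ℕ) * auxθ N j + auxθ N j := by
            push_cast; ring
          rw [a1, a2, Real.cos_sub, Real.cos_add]; ring
        have h2 : auxt N j ^ (m + 1) = auxt N j ^ m * ((1 + Real.cos (auxθ N j)) / 2) := pow_succ _ _
        rw [h2]
        linear_combination (-(1 / 4) * auxt N j ^ m) * h1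
      rw [Finset.sum_congr rfl e, Finset.sum_add_distrib, Finset.sum_add_distrib,
        ← Finset.mul_sum, ← Finset.mul_sum, ← Finset.mul_sum,
        ih d (by omega), ih (d + 1) (by omega), ih (d + 2) (by omega), aux_choose]
      push_cast
      simp only [pow_succ]
      field_simp
      ring

lemma auxorth (N d e : ℕ) (hd : 0 < d) (he : 0 < e) (h : d + e < N) :
    ∑ j ∈ range N, Real.cos (d * auxθ N j) * Real.cos (e * auxθ N j) =
      if d = e then (N : ℝ) / 2 else 0 := by
  wlog hde : e ≤ d generalizing d e
  · have := this e d he hd (by omega) (by omega)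
    simp only [mul_comm (Real.cos (d * _)), this, eq_comm]
  have e1 : ∀ j ∈ range N, Real.cos (d * auxθ N j) * Real.cos (e * auxθ N j) =
      1 / 2 * Real.cos ((d - e : ℕ) * auxθ N j) + 1 / 2 * Real.cos ((d + e : ℕ) * auxθ N j) := by
    intro j _
    rw [Nat.cast_sub hde, Nat.cast_add, sub_mul, add_mul, Real.cos_sub, Real.cos_add]; ring
  rw [Finset.sum_congr rfl e1, Finset.sum_add_distrib, ← Finset.mul_sum, ← Finset.mul_sum,
    auxS0 _ _ (by omega), auxS0 _ _ (by omega)]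
  by_cases hh : d = e
  · subst hh; simp [hd.ne']; ring
  · rw [if_neg (by omega), if_neg (by omega), if_neg hh]; simp

noncomputable def bern {n : ℕ} (t : ℝ) (x : Fin n → Bool) : ℝ :=
  ∏ i, if x i = true then t else 1 - t

lemma bern_symm {n : ℕ} (t : ℝ) (x y : Fin n → Bool) (h : wt x = wt y) :
    bern t x = bern t y := by
  have key : ∀ x : Fin n → Bool, bern t x = t ^ wt x * (1 - t) ^ (n - wt x) := by
    intro x
    have hc := Finset.card_filter_add_card_filter_not (s := (univ : Finset (Fin n)))
      (fun i => x i = true)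
    rw [Finset.card_univ, Fintype.card_fin] at hc
    unfold bern
    rw [Finset.prod_ite, Finset.prod_const, Finset.prod_const]
    have : n - wt x = (univ.filter (fun i => ¬ x i = true)).card := by
      unfold wt; omega
    rw [this, wt]
  rw [key, key, h]

lemma bern_nonneg {n : ℕ} (t : ℝ) (h0 : 0 ≤ t) (h1 : t ≤ 1) (x : Fin n → Bool) :
    0 ≤ bern t x := by
  apply Finset.prod_nonneg
  intro i _
  split_ifs <;> linarith

lemma bern_marg {n : ℕ} (t : ℝ) (S : Finset (Fin n)) (z : Fin n → Bool) :
    marg (bern t) S z = ∏ i ∈ S, if z i = true then t else 1 - t := by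
  have h := Finset.prod_univ_sum (fun _ : Fin n => (univ : Finset Bool))
    (fun i b => if i ∈ S → b = z i then (if b = true then t else 1 - t) else 0)
  rw [Fintype.piFinset_univ] at h
  have l : ∏ i ∈ S, (if z i = true then t else 1 - t) =
      ∏ i, ∑ b, if i ∈ S → b = z i then (if b = true then t else 1 - t) else 0 := by
    rw [← Finset.prod_subset (Finset.subset_univ S)]
    · apply Finset.prod_congr rfl
      intro i hi
      cases hz : z i <;> simp [hi]
    · intro i _ hi
      simp [hi]
  rw [l, h, marg]
  apply Finset.sum_congr rfl
  intro x _
  split_ifs with hx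
  · apply Finset.prod_congr rfl
    intro i _
    rw [if_pos (hx i)]
  · push Not at hx
    obtain ⟨i, hi, hxi⟩ := hx
    symm
    apply Finset.prod_eq_zero (mem_univ i)
    rw [if_neg]
    intro hh
    exact hxi (hh hi)

/-- mixture -/
noncomputable def mix {n : ℕ} (N : ℕ) (c : ℕ → ℝ) (x : Fin n → Bool) : ℝ :=
  ∑ j ∈ range N, c j * bern (auxt N j) x

lemma mix_marg {n : ℕ} (N : ℕ) (c : ℕ → ℝ) (S : Finset (Fin n)) (z : Fin n → Bool) :
    marg (mix N c) S z =
      ∑ j ∈ range N, c j * ∏ i ∈ S, if z i = true then auxt N j else 1 - auxt N j := by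
  simp_rw [← bern_marg]
  unfold marg mix
  simp_rw [Finset.mul_sum]
  rw [Finset.sum_comm]
  apply Finset.sum_congr rfl
  intro x _
  split_ifs <;> simp

lemma mix_sum {n : ℕ} (N : ℕ) (c : ℕ → ℝ) :
    ∑ x : Fin n → Bool, mix N c x = ∑ j ∈ range N, c j := by
  have := mix_marg (n := n) N c ∅ (fun _ => true)
  simpa [marg] using this

lemma mix_and {n : ℕ} (N K : ℕ) (hK : K ≤ n) (c : ℕ → ℝ) :
    ∑ x : Fin n → Bool, mix N c x * andK n K x = ∑ j ∈ range N, c j * auxt N j ^ K := by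
  have := mix_marg (n := n) N c (univ.filter (fun i : Fin n => (i : ℕ) < K)) (fun _ => true)
  have hc : (univ.filter (fun i : Fin n => (i : ℕ) < K)).card = K := by
    rw [Fin.card_filter_val_lt]; omega
  simp only [if_true, Finset.prod_const, hc] at this
  rw [← this, marg]
  apply Finset.sum_congr rfl
  intro x _
  simp [andK]

lemma auxt_mem (N j : ℕ) : 0 ≤ auxt N j ∧ auxt N j ≤ 1 := by
  have h1 := Real.neg_one_le_cos (auxθ N j)
  have h2 := Real.cos_le_one (auxθ N j)
  unfold auxt
  constructor <;> linarith

lemma mix_prob {n : ℕ} (N : ℕ) (c : ℕ → ℝ) (hc : ∀ j, 0 ≤ c j) (h1 : ∑ j ∈ range N, c j = 1) :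
    IsProb (mix (n := n) N c) := by
  refine ⟨fun x => Finset.sum_nonneg fun j _ => mul_nonneg (hc j)
    (bern_nonneg _ (auxt_mem N j).1 (auxt_mem N j).2 x), ?_⟩
  rw [mix_sum, h1]

lemma mix_symm {n : ℕ} (N : ℕ) (c : ℕ → ℝ) : SymmDist (mix (n := n) N c) := by
  intro x y h
  unfold mix
  simp_rw [bern_symm _ x y h]

lemma aux_poly {n : ℕ} (N k : ℕ) (g : ℕ → ℝ)
    (hg : ∀ m ≤ k, ∑ j ∈ range N, g j * auxt N j ^ m = 0)
    (S : Finset (Fin n)) (hS : S.card ≤ k) (z : Fin n → Bool) :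
    ∑ j ∈ range N, g j * ∏ i ∈ S, (if z i = true then auxt N j else 1 - auxt N j) = 0 := by
  let P : Polynomial ℝ := ∏ i ∈ S, if z i = true then Polynomial.X else 1 - Polynomial.X
  have hP : P.natDegree < k + 1 := by
    have : P.natDegree ≤ ∑ i ∈ S, 1 := by
      refine (Polynomial.natDegree_prod_le _ _).trans (Finset.sum_le_sum fun i _ => ?_)
      split_ifs
      · exact Polynomial.natDegree_X_le
      · refine (Polynomial.natDegree_sub_le _ _).trans ?_
        simp
    simp at this
    omega
  have he : ∀ t : ℝ, ∏ i ∈ S, (if z i = true then t else 1 - t) = P.eval t := by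
    intro t
    rw [Polynomial.eval_prod]
    apply Finset.prod_congr rfl
    intro i _
    split_ifs <;> simp
  simp_rw [he, Polynomial.eval_eq_sum_range' hP, Finset.mul_sum]
  rw [Finset.sum_comm]
  apply Finset.sum_eq_zero
  intro m hm
  have := hg m (by simp at hm; omega)
  calc _ = P.coeff m * ∑ j ∈ range N, g j * auxt N j ^ m := by
        rw [Finset.mul_sum]; apply Finset.sum_congr rfl; intros; ring
    _ = 0 := by rw [this, mul_zero]

theorem stmt9 (n k K : ℕ) (hk : 2 ≤ k) (hkK : k < K) (hKn : K ≤ n) :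
    ∃ μ ν : (Fin n → Bool) → ℝ, IsProb μ ∧ IsProb ν ∧ SymmDist μ ∧ SymmDist ν ∧
      PerfIndist μ ν k ∧
      (∑ x : Fin n → Bool, μ x * andK n K x) - (∑ x : Fin n → Bool, ν x * andK n K x) ≥
        Real.sqrt ((8 / 2 ^ (4 * K)) *
          ∑ d ∈ Finset.Icc (k + 1) K, (((2 * K).choose (K + d) : ℝ)) ^ 2) := by
  set N := 2 * K + 1 with hN
  set C : ℕ → ℝ := fun d => ((2 * K).choose (K + d) : ℝ) with hC
  set Q : ℝ := ∑ d ∈ Finset.Icc (k + 1) K, C d ^ 2 with hQ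
  have hNpos : (0 : ℝ) < N := by rw [hN]; positivity
  have hQpos : 0 < Q := by
    have h1 : C K ^ 2 ≤ Q :=
      Finset.single_le_sum (f := fun d => C d ^ 2) (fun d _ => sq_nonneg _)
        (Finset.mem_Icc.2 ⟨hkK, le_refl K⟩)
    have h2 : C K = 1 := by simp [hC, ← two_mul]
    rw [h2] at h1; linarith
  set g : ℕ → ℝ := fun j => ∑ d ∈ Finset.Icc (k + 1) K, C d * Real.cos (d * auxθ N j) with hg
  have hgt : ∀ m ≤ K, ∑ j ∈ range N, g j * auxt N j ^ m =
      ∑ d ∈ Finset.Icc (k + 1) K, C d * (N * ((2 * m).choose (m + d) : ℝ) / 4 ^ m) := by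
    intro m hm
    simp only [hg, Finset.sum_mul]
    rw [Finset.sum_comm]
    apply Finset.sum_congr rfl
    intro d hd
    rw [Finset.mem_Icc] at hd
    rw [← auxS N m d (by omega), Finset.mul_sum]
    apply Finset.sum_congr rfl
    intros; ring
  have hg0 : ∀ m ≤ k, ∑ j ∈ range N, g j * auxt N j ^ m = 0 := by
    intro m hm
    rw [hgt m (by omega)]
    apply Finset.sum_eq_zero
    intro d hd
    rw [Finset.mem_Icc] at hd
    rw [Nat.choose_eq_zero_of_lt (by omega)]
    simp
  have hgK : ∑ j ∈ range N, g j * auxt N j ^ K = N * Q / 4 ^ K := by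
    rw [hgt K le_rfl, hQ, Finset.mul_sum, Finset.sum_div]
    apply Finset.sum_congr rfl
    intro d _
    simp only [hC]; ring
  have hg2 : ∑ j ∈ range N, g j ^ 2 = N * Q / 2 := by
    simp only [hg, sq, Finset.sum_mul_sum]
    rw [Finset.sum_comm, hQ, Finset.mul_sum, Finset.sum_div]
    apply Finset.sum_congr rfl
    intro d hd
    rw [Finset.sum_comm]
    rw [Finset.mem_Icc] at hd
    have : ∀ e ∈ Finset.Icc (k + 1) K, ∑ j ∈ range N,
        C d * Real.cos (d * auxθ N j) * (C e * Real.cos (e * auxθ N j)) =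
        if d = e then C d * C e * (N / 2) else 0 := by
      intro e he
      rw [Finset.mem_Icc] at he
      have := auxorth N d e (by omega) (by omega) (by omega)
      rw [← mul_ite_zero, ← this, Finset.mul_sum]
      apply Finset.sum_congr rfl
      intros; ring
    rw [Finset.sum_congr rfl this, Finset.sum_ite_eq, if_pos (Finset.mem_Icc.2 hd)]
    ring
  set A : ℝ := ∑ j ∈ range N, |g j| with hA
  have hA2 : A ^ 2 ≤ N * (N * Q / 2) := by
    have := sq_sum_le_card_mul_sum_sq (s := range N) (f := fun j => |g j|)
    simpa [sq_abs, hg2] using this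
  have hA0 : 0 ≤ A := Finset.sum_nonneg fun _ _ => abs_nonneg _
  have hApos : 0 < A := by
    rcases hA0.lt_or_eq with h | h
    · exact h
    · exfalso
      have hz := (Finset.sum_eq_zero_iff_of_nonneg (fun j _ => abs_nonneg (g j))).1 h.symm
      have : ∑ j ∈ range N, g j ^ 2 = 0 :=
        Finset.sum_eq_zero fun j hj => by rw [abs_eq_zero.1 (hz j hj)]; simp
      rw [hg2] at this
      have : 0 < N * Q / 2 := by positivity
      linarith
  have hs0 : ∑ j ∈ range N, g j = 0 := by simpa using hg0 0 (by omega)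
  set p : ℕ → ℝ := fun j => (|g j| + g j) / A with hp
  set q : ℕ → ℝ := fun j => (|g j| - g j) / A with hq
  have hpq : ∀ F : ℕ → ℝ, ∑ j ∈ range N, p j * F j - ∑ j ∈ range N, q j * F j =
      2 / A * ∑ j ∈ range N, g j * F j := by
    intro F
    rw [← Finset.sum_sub_distrib, Finset.mul_sum]
    apply Finset.sum_congr rfl
    intro j _
    simp only [hp, hq]; ring
  refine ⟨mix N p, mix N q, mix_prob _ _ ?_ ?_, mix_prob _ _ ?_ ?_, mix_symm _ _, mix_symm _ _,
    ?_, ?_⟩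
  · intro j
    exact div_nonneg (by linarith [neg_abs_le (g j)]) hA0
  · simp only [hp]
    rw [← Finset.sum_div, Finset.sum_add_distrib, hs0, add_zero, ← hA, div_self hApos.ne']
  · intro j
    exact div_nonneg (by linarith [le_abs_self (g j)]) hA0
  · simp only [hq]
    rw [← Finset.sum_div, Finset.sum_sub_distrib, hs0, sub_zero, ← hA, div_self hApos.ne']
  · intro S hS z
    rw [← sub_eq_zero, mix_marg, mix_marg, hpq, aux_poly N k g hg0 S hS z, mul_zero]
  · rw [mix_and N K hKn, mix_and N K hKn, hpq, hgK, ge_iff_le]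
    apply Real.sqrt_le_iff.2
    refine ⟨by positivity, ?_⟩
    have e4 : (2 : ℝ) ^ (4 * K) = (4 ^ K) ^ 2 := by
      rw [← pow_mul, mul_comm K 2, show (4 : ℝ) = 2 ^ 2 by norm_num, ← pow_mul]
      congr 1; ring
    rw [e4]
    have hr : (2 / A * (N * Q / 4 ^ K)) ^ 2 = 4 * (N * Q) ^ 2 / (A ^ 2 * (4 ^ K) ^ 2) := by
      field_simp
      ring
    rw [hr, div_mul_eq_mul_div, div_le_div_iff₀ (by positivity) (by positivity)]
    have : 8 * Q * A ^ 2 ≤ 4 * (N * Q) ^ 2 := by nlinarith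
    calc _ = 8 * Q * A ^ 2 * (4 ^ K) ^ 2 := by ring
      _ ≤ _ := by gcongr
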